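/- Let T > 0, let κ denote the 2×2 matrix [[1,1],[i,−i]], and let w̌ : {(x,s) : 0 ≤ x ≤ s ≤ T} → M₂(ℂ) be continuous. Define W on L²([0,T]; ℂ²) by (W a)(x) := κ a(T−x) + ∫_x^T w̌(x,s) a(T−s) ds. Then W is an isomorphism of L²([0,T]; ℂ²) onto itself (bounded, bijective, with bounded inverse), and for every ξ ∈ (0,T], W maps the subspace { a ∈ L²([0,T]; ℂ²) : a = 0 a.e. on [0, T−ξ] } onto the subspace { y ∈ L²([0,T]; ℂ²) : y = 0 a.e. on [ξ, T] }. -/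

import Mathlib

/-!
Let `U a = κ a(T - ·)`, an isomorphism of `L²([0,T]; ℂ²)` with inverse `S y = κ⁻¹ y(T - ·)`.
Then `W = (1 + K) U`, where `K = W S - 1` is the Volterra operator
`(K y)(x) = ∫_x^T w̌(x,s) κ⁻¹ y(s) ds`, whose kernel is bounded by some `M` since the triangle is
compact.

Everything follows from the pointwise factorial bound
`‖(K^(n+1) y)(x)‖ ≤ M ‖y‖_{L¹} (M T)^n / n!` (`IsVolterra.norm_pow_apply_le_unif`).
It makes some power `K^n` a contraction, so `1 - (-K)^n`, and with it its factor `1 + K`, is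
invertible (`IsVolterra.isUnit_one_add`); hence `W` is an isomorphism.

For the subspaces, `U` exchanges `a = 0` on `[0, T - ξ]` with `y = 0` on `[ξ, T]`. The latter
space is preserved by `K` since `(K y)(x)` sees only the values of `y` on `[x, T]`
(`IsVolterra.apply_eq_zero`). Conversely, if `y + K y` vanishes on `[ξ, T]`, then there
`‖y‖ = ‖K y‖ = ‖K² y‖ = ⋯ → 0` (`IsVolterra.eq_zero_of_add`), so the inverse of `1 + K` preserves
the space too.
-/

open MeasureTheory Set

noncomputable section

/-- The measure `Lebesgue on [0,T]`. -/
def muT (T : ℝ) : Measure ℝ := volume.restrict (Icc (0 : ℝ) T)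

/-- The matrix `κ = [[1,1],[i,-i]]`. -/
def kappaMat : Matrix (Fin 2) (Fin 2) ℂ := !![1, 1; Complex.I, -Complex.I]

/-! ### The measure on `[0,T]` and bounds for the kernel -/

/-- Reflection `t ↦ T - t` preserves Lebesgue measure on `[0,T]`. -/
lemma measurePreserving_reflect (T : ℝ) :
    MeasurePreserving (fun t : ℝ => T - t) (muT T) (muT T) := by
  have h := (Measure.measurePreserving_sub_left (volume : Measure ℝ) T).restrict_preimage
    (measurableSet_Icc (a := (0 : ℝ)) (b := T))
  have e : (fun t : ℝ => T - t) ⁻¹' Icc 0 T = Icc 0 T := by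
    ext t; simp only [mem_preimage, mem_Icc]; constructor <;> rintro ⟨h1, h2⟩ <;> constructor <;>
      linarith
  rw [e] at h
  exact h

instance (T : ℝ) : IsFiniteMeasure (muT T) := by
  unfold muT; infer_instance

lemma ae_muT_iff {T : ℝ} {p : ℝ → Prop} :
    (∀ᵐ t ∂muT T, p t) ↔ ∀ᵐ t ∂(volume : Measure ℝ), t ∈ Icc 0 T → p t :=
  ae_restrict_iff' measurableSet_Icc

/-- The inverse of `κ`, in explicit form. -/
def kappaInv : Matrix (Fin 2) (Fin 2) ℂ :=
  !![1 / 2, -Complex.I / 2; 1 / 2, Complex.I / 2]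

lemma kappaMat_mul_kappaInv : kappaMat * kappaInv = 1 := by
  ext i j
  fin_cases i <;> fin_cases j <;>
    simp [kappaMat, kappaInv, Matrix.mul_apply, Fin.sum_univ_two] <;> ring_nf <;> simp

lemma kappaInv_mul_kappaMat : kappaInv * kappaMat = 1 := mul_eq_one_comm.mp kappaMat_mul_kappaInv

lemma norm_mulVec_le (A : Matrix (Fin 2) (Fin 2) ℂ) {m : ℝ} (hA : ∀ i j, ‖A i j‖ ≤ m)
    (v : Fin 2 → ℂ) : ‖A.mulVec v‖ ≤ 2 * m * ‖v‖ := by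
  have hm : 0 ≤ m := (norm_nonneg _).trans (hA 0 0)
  refine (pi_norm_le_iff_of_nonneg (by positivity)).2 fun i => ?_
  have h (j : Fin 2) : ‖A i j * v j‖ ≤ m * ‖v‖ := by
    rw [norm_mul]
    exact mul_le_mul (hA i j) (norm_le_pi_norm v j) (norm_nonneg _) hm
  have : A.mulVec v i = A i 0 * v 0 + A i 1 * v 1 := by
    simp [Matrix.mulVec, dotProduct, Fin.sum_univ_two]
  rw [this]
  linarith [norm_add_le (A i 0 * v 0) (A i 1 * v 1), h 0, h 1]

/-- A continuous kernel on the triangle is bounded there, also after multiplication by `κ⁻¹`. -/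
lemma exists_kernel_bound (T : ℝ) (wk : ℝ → ℝ → Matrix (Fin 2) (Fin 2) ℂ)
    (hwk : ∀ i j, ContinuousOn (fun z : ℝ × ℝ => wk z.1 z.2 i j)
      {z : ℝ × ℝ | 0 ≤ z.1 ∧ z.1 ≤ z.2 ∧ z.2 ≤ T}) :
    ∃ M : ℝ, 0 ≤ M ∧ ∀ x s, 0 ≤ x → x ≤ s → s ≤ T → ∀ v : Fin 2 → ℂ,
      ‖(wk x s).mulVec (kappaInv.mulVec v)‖ ≤ M * ‖v‖ := by
  have hc : IsCompact {z : ℝ × ℝ | 0 ≤ z.1 ∧ z.1 ≤ z.2 ∧ z.2 ≤ T} := by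
    refine (isCompact_Icc (a := ((0 : ℝ), (0 : ℝ))) (b := (T, T))).of_isClosed_subset ?_ ?_
    · exact (isClosed_le continuous_const continuous_fst).inter
        ((isClosed_le continuous_fst continuous_snd).inter
          (isClosed_le continuous_snd continuous_const))
    · rintro ⟨x, s⟩ ⟨h1, h2, h3⟩
      simp only at h1 h2 h3
      exact ⟨⟨h1, h1.trans h2⟩, ⟨h2.trans h3, h3⟩⟩
  choose m hm using fun i j => hc.exists_bound_of_continuousOn (hwk i j)
  set m' : ℝ := ∑ i, ∑ j, |m i j| with hm'
  have hle : ∀ i j, m i j ≤ m' := fun i j => by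
    refine (le_abs_self _).trans ?_
    refine (Finset.single_le_sum (f := fun j => |m i j|) (fun _ _ => abs_nonneg _)
      (Finset.mem_univ j)).trans ?_
    exact Finset.single_le_sum (f := fun i => ∑ j, |m i j|)
      (fun _ _ => Finset.sum_nonneg fun _ _ => abs_nonneg _) (Finset.mem_univ i)
  have hm0 : 0 ≤ m' := Finset.sum_nonneg fun _ _ => Finset.sum_nonneg fun _ _ => abs_nonneg _
  refine ⟨2 * m' * (2 * 1), by positivity, fun x s h1 h2 h3 v => ?_⟩
  have hk : ‖kappaInv.mulVec v‖ ≤ 2 * 1 * ‖v‖ := by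
    refine norm_mulVec_le _ (fun i j => ?_) v
    fin_cases i <;> fin_cases j <;> simp [kappaInv] <;> norm_num
  calc ‖(wk x s).mulVec (kappaInv.mulVec v)‖ ≤ 2 * m' * ‖kappaInv.mulVec v‖ :=
        norm_mulVec_le _ (fun i j => (hm i j (x, s) ⟨h1, h2, h3⟩).trans (hle i j)) _
    _ ≤ 2 * m' * (2 * 1 * ‖v‖) := by gcongr
    _ = _ := by ring

/-! ### Volterra operators on `L²([0,T]; ℂ²)` -/

/-- `K` acts as the Volterra operator with kernel `k`, i.e. `(K y)(x) = ∫_x^T k(x,s) y(s) ds`,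
where `k` is bounded by `M` on the triangle `0 ≤ x ≤ s ≤ T`. The kernel values `k x s` are plain
maps: neither linearity nor measurability enters, as only norms of the integral are estimated. -/
structure IsVolterra (T M : ℝ) (k : ℝ → ℝ → (Fin 2 → ℂ) → (Fin 2 → ℂ))
    (K : Lp (Fin 2 → ℂ) 2 (muT T) →L[ℂ] Lp (Fin 2 → ℂ) 2 (muT T)) : Prop where
  nonneg : 0 ≤ M
  bound : ∀ x s, 0 ≤ x → x ≤ s → s ≤ T → ∀ v, ‖k x s v‖ ≤ M * ‖v‖
  ae_eq : ∀ y : Lp (Fin 2 → ℂ) 2 (muT T), ∀ᵐ x ∂muT T, K y x = ∫ s in x..T, k x s (y s)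

namespace IsVolterra

variable {T M : ℝ} {k : ℝ → ℝ → (Fin 2 → ℂ) → (Fin 2 → ℂ)}
  {K : Lp (Fin 2 → ℂ) 2 (muT T) →L[ℂ] Lp (Fin 2 → ℂ) 2 (muT T)}

/-- A pointwise bound on `y` by an integrable `g` is integrated by `K`. -/
lemma norm_apply_le (h : IsVolterra T M k K) (y : Lp (Fin 2 → ℂ) 2 (muT T)) {g : ℝ → ℝ}
    (hg : IntegrableOn g (Icc 0 T)) (hy : ∀ᵐ s ∂muT T, ‖y s‖ ≤ g s) :
    ∀ᵐ x ∂muT T, ‖K y x‖ ≤ M * ∫ s in x..T, g s := by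
  rw [ae_muT_iff] at hy
  have hx := h.ae_eq y
  rw [ae_muT_iff] at hx ⊢
  filter_upwards [hx] with x hx hxT
  rw [hx hxT, ← intervalIntegral.integral_const_mul]
  refine intervalIntegral.norm_integral_le_of_norm_le hxT.2 ?_ ?_
  · filter_upwards [hy] with s hs hsT
    refine (h.bound x s hxT.1 hsT.1.le hsT.2 _).trans ?_
    exact mul_le_mul_of_nonneg_left (hs ⟨hxT.1.trans hsT.1.le, hsT.2⟩) h.nonneg
  · rw [intervalIntegrable_iff_integrableOn_Ioc_of_le hxT.2]
    exact (hg.mono_set fun s hs => ⟨hxT.1.trans hs.1.le, hs.2⟩).const_mul M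

lemma integrable_norm (y : Lp (Fin 2 → ℂ) 2 (muT T)) : Integrable (fun s => ‖y s‖) (muT T) :=
  ((Lp.memLp y).integrable (by norm_num)).norm

/-- The iterates of a Volterra operator decay factorially, pointwise. -/
lemma norm_pow_apply_le (h : IsVolterra T M k K) (y : Lp (Fin 2 → ℂ) 2 (muT T)) (n : ℕ) :
    ∀ᵐ x ∂muT T, ‖(K ^ (n + 1)) y x‖ ≤
      M * (∫ s, ‖y s‖ ∂muT T) * (M ^ n * (T - x) ^ n / n.factorial) := by
  induction n with
  | zero =>
    have h1 := h.norm_apply_le y (integrable_norm y) (.of_forall fun _ => le_rfl)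
    rw [ae_muT_iff] at h1 ⊢
    filter_upwards [h1] with x hx hxT
    simp only [zero_add, pow_one, pow_zero, mul_one, Nat.factorial_zero, Nat.cast_one, div_one]
    refine (hx hxT).trans (mul_le_mul_of_nonneg_left ?_ h.nonneg)
    rw [intervalIntegral.integral_of_le hxT.2]
    exact setIntegral_mono_set (integrable_norm y) (.of_forall fun _ => norm_nonneg _)
      (.of_forall fun s (hs : s ∈ Ioc x T) => ⟨hxT.1.trans hs.1.le, hs.2⟩)
  | succ n ih =>
    have h1 := h.norm_apply_le _ (Continuous.integrableOn_Icc (by fun_prop)) ih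
    filter_upwards [h1] with x hx
    rw [pow_succ' K]
    refine hx.trans (le_of_eq ?_)
    have hint : ∫ s in x..T, (T - s) ^ n = (T - x) ^ (n + 1) / (n + 1) := by
      rw [intervalIntegral.integral_comp_sub_left (fun u => u ^ n) T]
      simp [integral_pow]
    have hf : ((n + 1).factorial : ℝ) = (n + 1) * n.factorial := by
      push_cast [Nat.factorial_succ]; ring
    have e (s : ℝ) : M * (∫ s, ‖y s‖ ∂muT T) * (M ^ n * (T - s) ^ n / n.factorial) =
        M * (∫ s, ‖y s‖ ∂muT T) * M ^ n / n.factorial * (T - s) ^ n := by ring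
    simp_rw [e]
    rw [intervalIntegral.integral_const_mul, hint, hf]
    have : (n.factorial : ℝ) ≠ 0 := by positivity
    have : (n + 1 : ℝ) ≠ 0 := by positivity
    field_simp
    ring

/-- The bound of `norm_pow_apply_le`, made uniform in `x`. -/
lemma norm_pow_apply_le_unif (h : IsVolterra T M k K) (y : Lp (Fin 2 → ℂ) 2 (muT T)) (n : ℕ) :
    ∀ᵐ x ∂muT T, ‖(K ^ (n + 1)) y x‖ ≤
      M * (∫ s, ‖y s‖ ∂muT T) * ((M * T) ^ n / n.factorial) := by
  have h1 := h.norm_pow_apply_le y n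
  rw [ae_muT_iff] at h1 ⊢
  filter_upwards [h1] with x hx hxT
  have hI : 0 ≤ ∫ s, ‖y s‖ ∂muT T := integral_nonneg fun _ => norm_nonneg _
  have hM := h.nonneg
  have h0 : 0 ≤ T - x := sub_nonneg.2 hxT.2
  refine (hx hxT).trans ?_
  rw [mul_pow]
  gcongr
  linarith [hxT.1]

/-- The `L¹` norm is controlled by the `L²` norm, with the Hölder constant of `[0,T]`. -/
lemma integral_norm_le (y : Lp (Fin 2 → ℂ) 2 (muT T)) :
    ∫ s, ‖y s‖ ∂muT T ≤ ((muT T univ) ^ (1 / 2 : ℝ)).toReal * ‖y‖ := by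
  have h1 := eLpNorm_le_eLpNorm_mul_rpow_measure_univ (μ := muT T) (f := y)
    (p := 1) (q := 2) (by norm_num) (Lp.aestronglyMeasurable y)
  have h2 : ENNReal.ofReal (∫ s, ‖y s‖ ∂muT T) = eLpNorm y 1 (muT T) := by
    rw [eLpNorm_one_eq_lintegral_enorm, ofReal_integral_norm_eq_lintegral_enorm
      ((Lp.memLp y).integrable (by norm_num))]
  rw [← h2] at h1
  have h3 : (1 / (1 : ENNReal).toReal - 1 / (2 : ENNReal).toReal : ℝ) = 1 / 2 := by norm_num
  rw [h3] at h1
  have h4 := ENNReal.toReal_mono (ENNReal.mul_ne_top (Lp.eLpNorm_ne_top y)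
    (ENNReal.rpow_ne_top_of_nonneg (by norm_num) (measure_ne_top _ _))) h1
  rw [ENNReal.toReal_ofReal (integral_nonneg fun _ => norm_nonneg _), ENNReal.toReal_mul] at h4
  rw [mul_comm, Lp.norm_def]
  exact h4

/-- Some power of a Volterra operator is a contraction. -/
lemma exists_norm_pow_lt_one (h : IsVolterra T M k K) (hT : 0 < T) : ∃ n, ‖K ^ n‖ < 1 := by
  set c : ℝ := (measureUnivNNReal (muT T) : ℝ) ^ ((2 : ENNReal).toReal)⁻¹ * (M *
    ((muT T univ) ^ (1 / 2 : ℝ)).toReal) with hc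
  have hM := h.nonneg
  have hlim : Filter.Tendsto (fun n : ℕ => c * ((M * T) ^ n / n.factorial)) Filter.atTop
      (nhds 0) := by
    simpa using (FloorSemiring.tendsto_pow_div_factorial_atTop (M * T)).const_mul c
  obtain ⟨n, hn⟩ := (hlim.eventually (gt_mem_nhds zero_lt_one)).exists
  refine ⟨n + 1, lt_of_le_of_lt (ContinuousLinearMap.opNorm_le_bound _ (by positivity)
    fun y => ?_) hn⟩
  have hI : 0 ≤ ∫ s, ‖y s‖ ∂muT T := integral_nonneg fun _ => norm_nonneg _
  refine (Lp.norm_le_of_ae_bound (by positivity) (h.norm_pow_apply_le_unif y n)).trans ?_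
  have := integral_norm_le y
  calc _ ≤ (measureUnivNNReal (muT T) : ℝ) ^ ((2 : ENNReal).toReal)⁻¹ *
      (M * (((muT T univ) ^ (1 / 2 : ℝ)).toReal * ‖y‖) * ((M * T) ^ n / n.factorial)) := by
        gcongr
    _ = _ := by rw [hc]; ring

/-- `1 + K` is a factor, commuting with its cofactor, of the unit `1 - (-K) ^ n` for suitable `n`. -/
lemma isUnit_one_add (h : IsVolterra T M k K) (hT : 0 < T) : IsUnit (1 + K) := by
  obtain ⟨n, hn⟩ := h.exists_norm_pow_lt_one hT
  have h1 : ‖(-K) ^ n‖ < 1 := by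
    rcases Nat.even_or_odd n with he | ho
    · rwa [he.neg_pow]
    · rwa [ho.neg_pow, norm_neg]
  have h2 : IsUnit (1 - (-K) ^ n) := isUnit_one_sub_of_norm_lt_one h1
  rw [← mul_neg_geom_sum, sub_neg_eq_add] at h2
  have hcomm : Commute (1 + K) (∑ i ∈ Finset.range n, (-K) ^ i) :=
    Commute.sum_right _ _ _ fun i _ =>
      (((Commute.one_left K).add_left (Commute.refl K)).neg_right).pow_right i
  exact (hcomm.isUnit_mul_iff.1 h2).1

/-- By causality, `K` preserves the functions vanishing on `[ξ, T]`. -/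
lemma apply_eq_zero (h : IsVolterra T M k K) {ξ : ℝ} (y : Lp (Fin 2 → ℂ) 2 (muT T))
    (hy : ∀ᵐ t ∂muT T, ξ ≤ t → y t = 0) : ∀ᵐ t ∂muT T, ξ ≤ t → K y t = 0 := by
  rw [ae_muT_iff] at hy
  have hx := h.ae_eq y
  rw [ae_muT_iff] at hx ⊢
  filter_upwards [hx] with x hx hxT hξ
  rw [hx hxT]
  refine intervalIntegral.integral_zero_ae ?_
  filter_upwards [hy] with s hs hsT
  rw [uIoc_of_le hxT.2] at hsT
  have h0 := h.bound x s hxT.1 hsT.1.le hsT.2 (y s)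
  rw [hs ⟨hxT.1.trans hsT.1.le, hsT.2⟩ (hξ.trans hsT.1.le)] at h0 ⊢
  simpa using h0

/-- If `y + K y` vanishes on `[ξ, T]`, so does `y`: on `[ξ, T]` all the functions `K ^ n y` have
the same modulus, and it tends to zero. -/
lemma eq_zero_of_add (h : IsVolterra T M k K) {ξ : ℝ} (y : Lp (Fin 2 → ℂ) 2 (muT T))
    (hy : ∀ᵐ t ∂muT T, ξ ≤ t → (y + K y : Lp (Fin 2 → ℂ) 2 (muT T)) t = 0) :
    ∀ᵐ t ∂muT T, ξ ≤ t → y t = 0 := by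
  have h1 (n : ℕ) : ∀ᵐ t ∂muT T, ξ ≤ t → ((K ^ n) (y + K y)) t = 0 := by
    induction n with
    | zero => simpa using hy
    | succ n ih =>
      rw [pow_succ']
      exact h.apply_eq_zero _ ih
  have h2 (n : ℕ) : ∀ᵐ t ∂muT T, ξ ≤ t → ‖((K ^ (n + 1)) y) t‖ = ‖((K ^ n) y) t‖ := by
    have e : (K ^ n) (y + K y) = (K ^ n) y + (K ^ (n + 1)) y := by
      rw [map_add, pow_succ]; rfl
    filter_upwards [h1 n, Lp.coeFn_add ((K ^ n) y) ((K ^ (n + 1)) y)] with t ht ha hξ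
    have := ht hξ
    rw [e, ha, Pi.add_apply] at this
    rw [eq_neg_of_add_eq_zero_left this, norm_neg]
  filter_upwards [ae_all_iff.2 h2, ae_all_iff.2 (h.norm_pow_apply_le_unif y)] with t ht hb hξ
  have h3 (n : ℕ) : ‖((K ^ n) y) t‖ = ‖y t‖ := by
    induction n with
    | zero => simp
    | succ n ih => rw [ht n hξ, ih]
  have hlim := (FloorSemiring.tendsto_pow_div_factorial_atTop (M * T)).const_mul
    (M * ∫ s, ‖y s‖ ∂muT T)
  rw [mul_zero] at hlim
  exact norm_le_zero_iff.1 (ge_of_tendsto' hlim fun n => (h3 (n + 1)) ▸ hb n)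

end IsVolterra

/-! ### Constant matrices and reflection as operators -/

/-- Pointwise multiplication by a constant matrix on `L²([0,T]; ℂ²)`. -/
def mulL (T : ℝ) (A : Matrix (Fin 2) (Fin 2) ℂ) :
    Lp (Fin 2 → ℂ) 2 (muT T) →L[ℂ] Lp (Fin 2 → ℂ) 2 (muT T) :=
  (LinearMap.toContinuousLinearMap A.mulVecLin).compLpL 2 (muT T)

/-- The reflection `y ↦ y (T - ·)` on `L²([0,T]; ℂ²)`. -/
def reflL (T : ℝ) : Lp (Fin 2 → ℂ) 2 (muT T) →L[ℂ] Lp (Fin 2 → ℂ) 2 (muT T) :=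
  (Lp.compMeasurePreservingₗᵢ ℂ _ (measurePreserving_reflect T)).toContinuousLinearMap

lemma coeFn_mulL (T : ℝ) (A : Matrix (Fin 2) (Fin 2) ℂ) (y : Lp (Fin 2 → ℂ) 2 (muT T)) :
    ∀ᵐ t ∂muT T, mulL T A y t = A.mulVec (y t) :=
  ContinuousLinearMap.coeFn_compLpL _ y

lemma coeFn_reflL (T : ℝ) (y : Lp (Fin 2 → ℂ) 2 (muT T)) :
    ∀ᵐ t ∂muT T, reflL T y t = y (T - t) :=
  Lp.coeFn_compMeasurePreserving y (measurePreserving_reflect T)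

lemma ae_reflect {T : ℝ} {p : ℝ → Prop} (h : ∀ᵐ t ∂muT T, p t) : ∀ᵐ t ∂muT T, p (T - t) :=
  (measurePreserving_reflect T).quasiMeasurePreserving.ae h

lemma reflL_reflL (T : ℝ) (y : Lp (Fin 2 → ℂ) 2 (muT T)) : reflL T (reflL T y) = y := by
  apply Lp.ext
  filter_upwards [coeFn_reflL T (reflL T y), ae_reflect (coeFn_reflL T y)] with t h1 h2
  rw [h1, h2, sub_sub_cancel]

lemma mulL_mulL {T : ℝ} {A B : Matrix (Fin 2) (Fin 2) ℂ} (hAB : A * B = 1)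
    (y : Lp (Fin 2 → ℂ) 2 (muT T)) : mulL T A (mulL T B y) = y := by
  apply Lp.ext
  filter_upwards [coeFn_mulL T A (mulL T B y), coeFn_mulL T B y] with t h1 h2
  rw [h1, h2, Matrix.mulVec_mulVec, hAB, Matrix.one_mulVec]

/-! ### Exact controllability -/

/-- Exact controllability of the composite system: the operator
`(W a)(x) = κ a(T-x) + ∫_x^T w̌(x,s) a(T-s) ds` is an isomorphism of `L²([0,T];ℂ²)`
mapping, for each `ξ`, the delayed-control subspace onto the corresponding spatial
subspace. -/
theorem stmt10 (T : ℝ) (hT : 0 < T)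
    (wk : ℝ → ℝ → Matrix (Fin 2) (Fin 2) ℂ)
    (hwk : ∀ i j, ContinuousOn (fun z : ℝ × ℝ => wk z.1 z.2 i j)
      {z : ℝ × ℝ | 0 ≤ z.1 ∧ z.1 ≤ z.2 ∧ z.2 ≤ T})
    (W : Lp (Fin 2 → ℂ) 2 (muT T) →L[ℂ] Lp (Fin 2 → ℂ) 2 (muT T))
    (hW : ∀ a : Lp (Fin 2 → ℂ) 2 (muT T),
      (W a : ℝ → Fin 2 → ℂ) =ᵐ[muT T]
        fun x => kappaMat.mulVec (a (T - x)) +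
          ∫ s in x..T, (wk x s).mulVec (a (T - s))) :
    Function.Bijective W ∧
    (∃ Winv : Lp (Fin 2 → ℂ) 2 (muT T) →L[ℂ] Lp (Fin 2 → ℂ) 2 (muT T),
      Winv.comp W = ContinuousLinearMap.id ℂ _ ∧
      W.comp Winv = ContinuousLinearMap.id ℂ _) ∧
    ∀ ξ : ℝ, 0 < ξ → ξ ≤ T →
      (⇑W '' {a : Lp (Fin 2 → ℂ) 2 (muT T) |
          ∀ᵐ t ∂(volume : Measure ℝ), t ∈ Icc (0 : ℝ) (T - ξ) → a t = 0})
        = {y : Lp (Fin 2 → ℂ) 2 (muT T) |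
          ∀ᵐ t ∂(volume : Measure ℝ), t ∈ Icc ξ T → y t = 0} := by
  obtain ⟨M, hM0, hM⟩ := exists_kernel_bound T wk hwk
  set U := (mulL T kappaMat) * (reflL T) with hU
  set S := (reflL T) * (mulL T kappaInv) with hS
  have hUa (a : Lp (Fin 2 → ℂ) 2 (muT T)) :
      ∀ᵐ t ∂muT T, U a t = kappaMat.mulVec (a (T - t)) := by
    filter_upwards [coeFn_mulL T kappaMat (reflL T a), coeFn_reflL T a] with t h1 h2
    rw [← h2]; exact h1
  have hSy (y : Lp (Fin 2 → ℂ) 2 (muT T)) :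
      ∀ᵐ t ∂muT T, S y t = kappaInv.mulVec (y (T - t)) := by
    filter_upwards [coeFn_reflL T (mulL T kappaInv y), ae_reflect (coeFn_mulL T kappaInv y)]
      with t h1 h2
    rw [← h2]; exact h1
  have hSU : S * U = 1 := by
    ext1 y
    change reflL T (mulL T kappaInv (mulL T kappaMat (reflL T y))) = y
    rw [mulL_mulL kappaInv_mul_kappaMat, reflL_reflL]
  have hUS : U * S = 1 := by
    ext1 y
    change mulL T kappaMat (reflL T (reflL T (mulL T kappaInv y))) = y
    rw [reflL_reflL, mulL_mulL kappaMat_mul_kappaInv]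
  set K := W * S - 1 with hK
  have hWS : W * S = 1 + K := by rw [hK]; abel
  have hV : IsVolterra T M (fun x s v => (wk x s).mulVec (kappaInv.mulVec v)) K := by
    refine ⟨hM0, hM, fun y => ?_⟩
    have hS' : ∀ᵐ t ∂muT T, S y (T - t) = kappaInv.mulVec (y t) := by
      filter_upwards [ae_reflect (hSy y)] with t ht
      rw [ht, sub_sub_cancel]
    have hS'' := ae_muT_iff.1 hS'
    have hmem : ∀ᵐ x ∂muT T, x ∈ Icc 0 T := ae_restrict_mem measurableSet_Icc
    filter_upwards [hW (S y), hS', hmem, Lp.coeFn_sub (W (S y)) y] with x h1 h2 h3 h4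
    have e : K y = W (S y) - y := rfl
    rw [e, h4, Pi.sub_apply, h1, h2, Matrix.mulVec_mulVec, kappaMat_mul_kappaInv,
      Matrix.one_mulVec, add_sub_cancel_left]
    refine intervalIntegral.integral_congr_ae ?_
    filter_upwards [hS''] with s hs hsT
    rw [uIoc_of_le h3.2] at hsT
    rw [hs ⟨h3.1.trans hsT.1.le, hsT.2⟩]
  have hunit : IsUnit (1 + K) := hV.isUnit_one_add hT
  have hWU : W = (1 + K) * U := by rw [← hWS, mul_assoc, hSU, mul_one]
  have hWunit : IsUnit W := by
    rw [hWU]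
    exact hunit.mul ⟨⟨U, S, hUS, hSU⟩, rfl⟩
  obtain ⟨⟨W', V, hWV, hVW⟩, rfl⟩ := hWunit
  simp only at *
  refine ⟨⟨fun a b hab => ?_, fun y => ⟨V y, (DFunLike.congr_fun hWV y)⟩⟩, ⟨V, hVW, hWV⟩, fun ξ hξ hξT => ?_⟩
  · have := congrArg V hab
    rwa [show V (W' a) = a from (DFunLike.congr_fun hVW a), show V (W' b) = b from (DFunLike.congr_fun hVW b)] at this
  have hY (y : Lp (Fin 2 → ℂ) 2 (muT T)) :
      (∀ᵐ t ∂(volume : Measure ℝ), t ∈ Icc ξ T → y t = 0) ↔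
        ∀ᵐ t ∂muT T, ξ ≤ t → y t = 0 := by
    rw [ae_muT_iff]
    refine Filter.eventually_congr (.of_forall fun t => ?_)
    exact ⟨fun h h1 h2 => h ⟨h2, h1.2⟩, fun h h1 => h ⟨hξ.le.trans h1.1, h1.2⟩ h1.1⟩
  have hA (a : Lp (Fin 2 → ℂ) 2 (muT T)) :
      (∀ᵐ t ∂(volume : Measure ℝ), t ∈ Icc 0 (T - ξ) → a t = 0) ↔
        ∀ᵐ t ∂muT T, t ≤ T - ξ → a t = 0 := by
    rw [ae_muT_iff]
    refine Filter.eventually_congr (.of_forall fun t => ?_)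
    exact ⟨fun h h1 h2 => h ⟨h1.1, h2⟩, fun h h1 => h ⟨h1.1, by linarith [h1.2]⟩ h1.2⟩
  ext f
  simp only [mem_image, mem_ofPred_eq, hY, hA]
  constructor
  · rintro ⟨a, ha, rfl⟩
    have hUz : ∀ᵐ t ∂muT T, ξ ≤ t → U a t = 0 := by
      filter_upwards [hUa a, ae_reflect ha] with t h1 h2 h3
      rw [h1, h2 (by linarith), Matrix.mulVec_zero]
    have e : W' a = U a + K (U a) := (DFunLike.congr_fun hWU a)
    rw [e]
    filter_upwards [hUz, hV.apply_eq_zero _ hUz, Lp.coeFn_add (U a) (K (U a))] with t h1 h2 h3 h4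
    rw [h3, Pi.add_apply, h1 h4, h2 h4, add_zero]
  · intro hf
    have e : W' (V f) = U (V f) + K (U (V f)) := (DFunLike.congr_fun hWU (V f))
    have e' : W' (V f) = f := (DFunLike.congr_fun hWV f)
    refine ⟨V f, ?_, e'⟩
    rw [e'] at e
    have hy := hV.eq_zero_of_add (ξ := ξ) (U (V f)) (by rwa [← e])
    have e2 : S (U (V f)) = V f := (DFunLike.congr_fun hSU (V f))
    filter_upwards [hSy (U (V f)), ae_reflect hy] with t h1 h2 h3
    rw [e2] at h1
    rw [h1, h2 (by linarith), Matrix.mulVec_zero]
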